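/- Let u solve the Goursat problem and u⁰ solve the basic problem, and set z = u − u⁰. Then for all i ∈ {1,…,N₁} and j ∈ {1,…,N₂}: ‖z‖_{i,j} ≤ ‖z‖_{i,j−1}·(1 + h₁h₂R′_{i,j}) + h₂R_{i,j}·h₁·Σ_{s=1}^{i−1} [(2N_{s,j} + L_{s,j})‖z‖_{s,j} + h(N_{s,j} + L_{s,j})A] + h₁h₂R_{i,j}(L_{i,j} + N_{i,j})‖z‖_{i−1,j} + h₁h₂·h·R_{i,j}(N_{i,j} + L_{i,j})A, where ‖z‖_{0,j} = ‖z‖_{i,0} = 0. -/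

import Mathlib

open Set

noncomputable section

/-- The closed domain `D̄ = [0,X] × [0,Y]`. -/
def clD (X Y : ℝ) : Set (ℝ × ℝ) := Icc 0 X ×ˢ Icc 0 Y

/-- The open domain `D = (0,X) × (0,Y)`. -/
def opD (X Y : ℝ) : Set (ℝ × ℝ) := Ioo 0 X ×ˢ Ioo 0 Y

/-- Partial derivative in the first variable. -/
def pdx (u : ℝ × ℝ → ℝ) (p : ℝ × ℝ) : ℝ := deriv (fun t => u (t, p.2)) p.1

/-- Partial derivative in the second variable. -/
def pdy (u : ℝ × ℝ → ℝ) (p : ℝ × ℝ) : ℝ := deriv (fun t => u (p.1, t)) p.2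

/-- Mixed partial derivative `∂²u/∂x∂y` (derivative in `y` of the derivative in `x`). -/
def pdxy (u : ℝ × ℝ → ℝ) (p : ℝ × ℝ) : ℝ := pdy (pdx u) p

/-- The open mesh cell `P_{i,j} = (x_{i-1}, x_i) × (y_{j-1}, y_j)`, where
`x_i = i·(X/N₁)`, `y_j = j·(Y/N₂)`. -/
def cellOp (X Y : ℝ) (N₁ N₂ : ℕ) (i j : ℕ) : Set (ℝ × ℝ) :=
  Ioo (((i : ℝ) - 1) * (X / N₁)) ((i : ℝ) * (X / N₁)) ×ˢ
    Ioo (((j : ℝ) - 1) * (Y / N₂)) ((j : ℝ) * (Y / N₂))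

/-- The closed mesh cell `P̄_{i,j} = [x_{i-1}, x_i] × [y_{j-1}, y_j]`. -/
def cellCl (X Y : ℝ) (N₁ N₂ : ℕ) (i j : ℕ) : Set (ℝ × ℝ) :=
  Icc (((i : ℝ) - 1) * (X / N₁)) ((i : ℝ) * (X / N₁)) ×ˢ
    Icc (((j : ℝ) - 1) * (Y / N₂)) ((j : ℝ) * (Y / N₂))

/-- The lower-left corner `(x_{i-1}, y_{j-1})` of the cell `P_{i,j}`. -/
def meshNode (X Y : ℝ) (N₁ N₂ : ℕ) (i j : ℕ) : ℝ × ℝ :=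
  (((i : ℝ) - 1) * (X / N₁), ((j : ℝ) - 1) * (Y / N₂))

/-- `h = √(h₁² + h₂²)`, with `h₁ = X/N₁`, `h₂ = Y/N₂`. -/
def meshH (X Y : ℝ) (N₁ N₂ : ℕ) : ℝ := Real.sqrt ((X / N₁) ^ 2 + (Y / N₂) ^ 2)

/-- The confluent hypergeometric function
`₀F₁(b; w) = Σ_{n=0}^∞ wⁿ / ((b)ₙ · n!)`, where `(b)ₙ = b(b+1)⋯(b+n−1)`. -/
def hyp0F1 (b w : ℝ) : ℝ :=
  ∑' n : ℕ, w ^ n / ((∏ m ∈ Finset.range n, (b + (m : ℝ))) * (n.factorial : ℝ))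

/-- `u` solves the Goursat problem `∂²u/∂x∂y + N(u)·u = f` on `D`,
`u(x,0) = ψ(x)`, `u(0,y) = φ(y)`, with the regularity stated in the paper. -/
structure GoursatSol (X Y : ℝ) (N : ℝ → ℝ) (f : ℝ × ℝ → ℝ) (ψ φ : ℝ → ℝ)
    (u : ℝ × ℝ → ℝ) : Prop where
  cont : ContinuousOn u (clD X Y)
  diffx : ∀ p ∈ opD X Y, DifferentiableAt ℝ (fun t => u (t, p.2)) p.1
  diffy : ∀ p ∈ opD X Y, DifferentiableAt ℝ (fun t => u (p.1, t)) p.2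
  diffxy : ∀ p ∈ opD X Y, DifferentiableAt ℝ (fun t => pdx u (p.1, t)) p.2
  contx : ContinuousOn (pdx u) (opD X Y)
  conty : ContinuousOn (pdy u) (opD X Y)
  contxy : ContinuousOn (pdxy u) (opD X Y)
  eqn : ∀ p ∈ opD X Y, pdxy u p + N (u p) * u p = f p
  bc1 : ∀ x ∈ Icc (0 : ℝ) X, u (x, 0) = ψ x
  bc2 : ∀ y ∈ Icc (0 : ℝ) Y, u (0, y) = φ y

/-- `u0` solves the basic problem: the Goursat problem with the nonlinear coefficient
frozen, on each open mesh cell `P_{i,j}`, at the value of the unknown at the lower-left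
corner of that cell. -/
structure BasicSol (X Y : ℝ) (N : ℝ → ℝ) (f : ℝ × ℝ → ℝ) (ψ φ : ℝ → ℝ)
    (N₁ N₂ : ℕ) (u0 : ℝ × ℝ → ℝ) : Prop where
  cont : ContinuousOn u0 (clD X Y)
  diffx : ∀ i ∈ Finset.Icc 1 N₁, ∀ j ∈ Finset.Icc 1 N₂, ∀ p ∈ cellOp X Y N₁ N₂ i j,
      DifferentiableAt ℝ (fun t => u0 (t, p.2)) p.1
  diffy : ∀ i ∈ Finset.Icc 1 N₁, ∀ j ∈ Finset.Icc 1 N₂, ∀ p ∈ cellOp X Y N₁ N₂ i j,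
      DifferentiableAt ℝ (fun t => u0 (p.1, t)) p.2
  diffxy : ∀ i ∈ Finset.Icc 1 N₁, ∀ j ∈ Finset.Icc 1 N₂, ∀ p ∈ cellOp X Y N₁ N₂ i j,
      DifferentiableAt ℝ (fun t => pdx u0 (p.1, t)) p.2
  contx : ∀ i ∈ Finset.Icc 1 N₁, ∀ j ∈ Finset.Icc 1 N₂,
      ContinuousOn (pdx u0) (cellOp X Y N₁ N₂ i j)
  conty : ∀ i ∈ Finset.Icc 1 N₁, ∀ j ∈ Finset.Icc 1 N₂,
      ContinuousOn (pdy u0) (cellOp X Y N₁ N₂ i j)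
  contxy : ∀ i ∈ Finset.Icc 1 N₁, ∀ j ∈ Finset.Icc 1 N₂,
      ContinuousOn (pdxy u0) (cellOp X Y N₁ N₂ i j)
  eqn : ∀ i ∈ Finset.Icc 1 N₁, ∀ j ∈ Finset.Icc 1 N₂, ∀ p ∈ cellOp X Y N₁ N₂ i j,
      pdxy u0 p + N (u0 (meshNode X Y N₁ N₂ i j)) * u0 p = f p
  bc1 : ∀ x ∈ Icc (0 : ℝ) X, u0 (x, 0) = ψ x
  bc2 : ∀ y ∈ Icc (0 : ℝ) Y, u0 (0, y) = φ y

/-- `‖z‖_{i,j} = sup_{P̄_{i,j}} |z|`, with the convention `‖z‖_{0,j} = ‖z‖_{i,0} = 0`. -/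
def znorm (X Y : ℝ) (N₁ N₂ : ℕ) (z : ℝ × ℝ → ℝ) (i j : ℕ) : ℝ :=
  if i = 0 ∨ j = 0 then 0 else ⨆ p ∈ cellCl X Y N₁ N₂ i j, |z p|

/-- `N_{i,j} = |N(u⁰(x_{i−1}, y_{j−1}))|`. -/
def coefN (X Y : ℝ) (N₁ N₂ : ℕ) (N : ℝ → ℝ) (u0 : ℝ × ℝ → ℝ) (i j : ℕ) : ℝ :=
  |N (u0 (meshNode X Y N₁ N₂ i j))|

/-- `L_{i,j} = sup_{(x,y) ∈ P̄_{i,j}, θ ∈ [0,1]} |𝓝′(u⁰_{i,j} − θ(u⁰_{i,j} − u(x,y)))|`,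
where `𝓝(v) = N(v)·v`. -/
def coefL (X Y : ℝ) (N₁ N₂ : ℕ) (N : ℝ → ℝ) (u u0 : ℝ × ℝ → ℝ) (i j : ℕ) : ℝ :=
  ⨆ p ∈ cellCl X Y N₁ N₂ i j, ⨆ θ ∈ Icc (0 : ℝ) 1,
    |deriv (fun v => N v * v)
      (u0 (meshNode X Y N₁ N₂ i j) - θ * (u0 (meshNode X Y N₁ N₂ i j) - u p))|

/-- `R_{i,j} = ₀F₁(1; N_{i,j}·h₁·h₂)`. -/
def coefR (X Y : ℝ) (N₁ N₂ : ℕ) (N : ℝ → ℝ) (u0 : ℝ × ℝ → ℝ) (i j : ℕ) : ℝ :=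
  hyp0F1 1 (coefN X Y N₁ N₂ N u0 i j * (X / N₁) * (Y / N₂))

/-- `R′_{i,j} = ₀F₁(2; N_{i,j}·h₁·h₂)·N_{i,j}`. -/
def coefR' (X Y : ℝ) (N₁ N₂ : ℕ) (N : ℝ → ℝ) (u0 : ℝ × ℝ → ℝ) (i j : ℕ) : ℝ :=
  hyp0F1 2 (coefN X Y N₁ N₂ N u0 i j * (X / N₁) * (Y / N₂)) * coefN X Y N₁ N₂ N u0 i j

/-- The constant
`A = √([sup|ψ′| + Y(sup|f| + N_α·sup|u|)]² + [sup|φ′| + X(sup|f| + N_α·sup|u|)]²)`,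
where `N_α = sup_{D̄} |N(u)|`. -/
def constA (X Y : ℝ) (N : ℝ → ℝ) (f : ℝ × ℝ → ℝ) (ψ φ : ℝ → ℝ) (u : ℝ × ℝ → ℝ) : ℝ :=
  Real.sqrt
    (((⨆ x ∈ Ioo (0 : ℝ) X, |deriv ψ x|) +
        Y * ((⨆ p ∈ clD X Y, |f p|) + (⨆ p ∈ clD X Y, |N (u p)|) * ⨆ p ∈ clD X Y, |u p|)) ^ 2 +
      ((⨆ y ∈ Ioo (0 : ℝ) Y, |deriv φ y|) +
        X * ((⨆ p ∈ clD X Y, |f p|) + (⨆ p ∈ clD X Y, |N (u p)|) * ⨆ p ∈ clD X Y, |u p|)) ^ 2)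

/-!
On `P_{i,j}` the error `z = u - u⁰` satisfies
`∂²z/∂x∂y = N(u⁰_{i,j}) (u - u⁰_{i,j}) - (𝓝(u) - 𝓝(u⁰_{i,j})) - N(u⁰_{i,j}) z`. By the mean value
theorem the first two terms are at most `(N_{i,j} + L_{i,j}) |u - u⁰_{i,j}|`, and
`|u - u⁰_{i,j}| ≤ |z(x_{i-1}, y_{j-1})| + h A` because `√(Δx² + Δy²) A` bounds every increment
of `u`.

Over a rectangle the integral of `∂²z/∂x∂y` is the alternating sum of the corner values of `z`, so
bounds on the mixed derivative become bounds on these increments. Summed over the cells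
`P_{1,j}, …, P_{i-1,j}`, where `z` vanishes on the side `x = 0`, they control the left side of
`P_{i,j}` and produce the sum over `s`. Inside `P_{i,j}` the term `N(u⁰_{i,j}) z` is absorbed by a
Gronwall argument: Picard iteration of `w ↦ c + ∫∫ K w` has the limit `c · ₀F₁(1; K Δx Δy)`, which
is where `R_{i,j}` comes from. Finally `₀F₁(1; w) ≤ 1 + w · ₀F₁(2; w)` turns `R_{i,j}` into
`1 + h₁ h₂ R'_{i,j}` in front of `‖z‖_{i,j-1}`.
-/

section Supremum

lemma le_biSup_of_bddAbove_image {α β : Type*} [ConditionallyCompleteLattice β] {S : Set α}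
    {g : α → β} (hg : BddAbove (g '' S)) {p : α} (hp : p ∈ S) : g p ≤ ⨆ q ∈ S, g q := by
  refine le_ciSup₂ (f := fun q (_ : q ∈ S) => g q) (hg.mono ?_) p hp
  rintro _ ⟨_, ⟨q, rfl⟩, ⟨hq, rfl⟩⟩
  exact mem_image_of_mem g hq

lemma abs_le_biSup_abs_of_isCompact {α : Type*} [TopologicalSpace α] {S : Set α}
    (hS : IsCompact S) {g : α → ℝ} (hg : ContinuousOn g S) {p : α} (hp : p ∈ S) :
    |g p| ≤ ⨆ q ∈ S, |g q| :=
  le_biSup_of_bddAbove_image (g := fun q => |g q|) (hS.bddAbove_image hg.abs) hp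

lemma biSup_abs_nonneg {α : Type*} (S : Set α) (g : α → ℝ) : 0 ≤ ⨆ q ∈ S, |g q| :=
  Real.iSup_nonneg fun q => Real.iSup_nonneg fun _ => abs_nonneg (g q)

lemma le_biSup_biSup_of_isCompact {α β : Type*} [TopologicalSpace α] [TopologicalSpace β]
    {S : Set α} {T : Set β} (hS : IsCompact S) (hT : IsCompact T) {g : α → β → ℝ}
    (hg : ContinuousOn (fun q : α × β => g q.1 q.2) (S ×ˢ T)) {a : α} (ha : a ∈ S) {b : β}
    (hb : b ∈ T) : g a b ≤ ⨆ a' ∈ S, ⨆ b' ∈ T, g a' b' := by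
  obtain ⟨B, hB⟩ := (hS.prod hT).bddAbove_image hg
  have hB' : ∀ a' ∈ S, ∀ b' ∈ T, g a' b' ≤ max B 0 := fun a' ha' b' hb' =>
    (hB (mem_image_of_mem _ (mk_mem_prod ha' hb'))).trans (le_max_left _ _)
  have hinner : g a b ≤ ⨆ b' ∈ T, g a b' :=
    le_biSup_of_bddAbove_image ⟨max B 0, forall_mem_image.2 (hB' a ha)⟩ hb
  have houter : ∀ a' ∈ S, ⨆ b' ∈ T, g a' b' ≤ max B 0 := fun a' ha' =>
    Real.iSup_le (fun b' => Real.iSup_le (hB' a' ha' b') (le_max_right _ _)) (le_max_right _ _)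
  exact hinner.trans <| le_biSup_of_bddAbove_image (g := fun a' => ⨆ b' ∈ T, g a' b')
    ⟨max B 0, forall_mem_image.2 houter⟩ ha

end Supremum

lemma contDiff_of_forall_hasSum_pow {𝕜 : Type*} [RCLike 𝕜] {ν : ℕ → 𝕜} {N : 𝕜 → 𝕜}
    (hN : ∀ v, HasSum (fun s => ν s * v ^ s) (N v)) {n : WithTop ℕ∞} : ContDiff 𝕜 n N := by
  have hradius : (FormalMultilinearSeries.ofScalars 𝕜 ν).radius = ⊤ := by
    refine FormalMultilinearSeries.radius_eq_top_of_summable_norm _ fun r => ?_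
    refine (hN ((r : ℝ) : 𝕜)).summable.norm.congr fun s => ?_
    simp
  have hseries : HasFPowerSeriesOnBall N (FormalMultilinearSeries.ofScalars 𝕜 ν) 0 ⊤ :=
    ⟨hradius.ge, ENNReal.zero_lt_top, fun {v} _ => by
      simpa [FormalMultilinearSeries.ofScalars_apply_eq, mul_comm] using hN v⟩
  exact contDiff_iff_contDiffAt.2 fun v =>
    (hseries.analyticOnNhd v (by simp)).contDiffAt

section Hypergeometric

lemma min_le_prod_range_add {b : ℝ} (hb : 0 < b) (n : ℕ) :
    min b 1 ≤ ∏ m ∈ Finset.range n, (b + (m : ℝ)) := by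
  cases n with
  | zero => simp
  | succ n =>
    rw [Finset.prod_range_succ']
    have hone : 1 ≤ ∏ m ∈ Finset.range n, (b + ((m + 1 : ℕ) : ℝ)) :=
      Finset.one_le_prod fun m _ => by push_cast; linarith [m.cast_nonneg (α := ℝ)]
    simpa using (min_le_left b 1).trans (le_mul_of_one_le_left hb.le hone)

lemma summable_hyp0F1 {b : ℝ} (hb : 0 < b) (w : ℝ) :
    Summable fun n : ℕ =>
      w ^ n / ((∏ m ∈ Finset.range n, (b + (m : ℝ))) * (n.factorial : ℝ)) := by
  refine .of_norm_bounded ((Real.summable_pow_div_factorial |w|).div_const (min b 1)) fun n => ?_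
  have hprod := min_le_prod_range_add hb n
  rw [norm_div, norm_pow, Real.norm_eq_abs, Real.norm_of_nonneg (by positivity), div_div,
    mul_comm (n.factorial : ℝ)]
  gcongr

lemma hyp0F1_nonneg {b w : ℝ} (hb : 0 < b) (hw : 0 ≤ w) : 0 ≤ hyp0F1 b w :=
  tsum_nonneg fun n => by positivity

lemma hyp0F1_le_hyp0F1 {b w w' : ℝ} (hb : 0 < b) (hw : 0 ≤ w) (hle : w ≤ w') :
    hyp0F1 b w ≤ hyp0F1 b w' :=
  Summable.tsum_le_tsum (fun n => by gcongr) (summable_hyp0F1 hb w) (summable_hyp0F1 hb w')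

lemma hyp0F1_le_one_add {b w : ℝ} (hb : 0 < b) (hw : 0 ≤ w) :
    hyp0F1 b w ≤ 1 + w / b * hyp0F1 (b + 1) w := by
  have hterm : ∀ n : ℕ,
      w ^ (n + 1) / ((∏ m ∈ Finset.range (n + 1), (b + (m : ℝ))) * ((n + 1).factorial : ℝ)) ≤
        w / b * (w ^ n / ((∏ m ∈ Finset.range n, (b + 1 + (m : ℝ))) * (n.factorial : ℝ))) := by
    intro n
    have hshift : ∏ m ∈ Finset.range (n + 1), (b + (m : ℝ)) =
        b * ∏ m ∈ Finset.range n, (b + 1 + (m : ℝ)) := by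
      rw [Finset.prod_range_succ', mul_comm, Nat.cast_zero, add_zero]
      exact congrArg _ (Finset.prod_congr rfl fun m _ => by push_cast; ring)
    have hfact : (n.factorial : ℝ) ≤ (n + 1).factorial := by
      exact_mod_cast Nat.factorial_le n.le_succ
    rw [hshift, div_mul_div_comm, ← pow_succ', ← mul_assoc]
    gcongr
  have hsucc := summable_hyp0F1 (b := b + 1) (by positivity) w
  rw [hyp0F1, (summable_hyp0F1 hb w).tsum_eq_zero_add, hyp0F1, ← tsum_mul_left]
  refine add_le_add (by simp) (Summable.tsum_le_tsum hterm ?_ (hsucc.mul_left _))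
  exact (summable_nat_add_iff 1).2 (summable_hyp0F1 hb w)

lemma hasSum_hyp0F1_one (w : ℝ) :
    HasSum (fun n : ℕ => w ^ n / (n.factorial : ℝ) ^ 2) (hyp0F1 1 w) := by
  have hfact : ∀ n : ℕ, ∏ m ∈ Finset.range n, (1 + (m : ℝ)) = n.factorial := fun n => by
    rw [← Finset.prod_range_add_one_eq_factorial]
    push_cast
    exact Finset.prod_congr rfl fun m _ => add_comm _ _
  have hsum : HasSum _ (hyp0F1 1 w) := (summable_hyp0F1 one_pos w).hasSum
  simpa only [hfact, ← sq] using hsum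

end Hypergeometric

section MixedDifference

/-- The increment of `z` over the rectangle `[a, a'] × [b, b']`, that is, the integral over it of
`∂²z/∂x∂y` when `z` is smooth. -/
def mixedDiff (z : ℝ × ℝ → ℝ) (a a' b b' : ℝ) : ℝ :=
  z (a', b') - z (a, b') - z (a', b) + z (a, b)

lemma abs_mixedDiff_le_sum (z : ℝ × ℝ → ℝ) (x : ℕ → ℝ) (b b' : ℝ) (k : ℕ) :
    |mixedDiff z (x 0) (x k) b b'| ≤
      ∑ s ∈ Finset.range k, |mixedDiff z (x s) (x (s + 1)) b b'| := by
  have htelescope : mixedDiff z (x 0) (x k) b b' =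
      ∑ s ∈ Finset.range k, mixedDiff z (x s) (x (s + 1)) b b' := by
    have hsum := Finset.sum_range_sub (fun s => z (x s, b') - z (x s, b)) k
    rw [mixedDiff, Finset.sum_congr rfl fun s _ => ?_, hsum]
    · ring
    · rw [mixedDiff]; ring
  exact htelescope ▸ Finset.abs_sum_le_sum_abs _ _

lemma sub_le_sub_of_hasDerivAt_le {F F' G G' : ℝ → ℝ} {a b : ℝ} (hab : a ≤ b)
    (hF : ContinuousOn F (Icc a b)) (hG : ContinuousOn G (Icc a b))
    (hF' : ∀ x ∈ Ioo a b, HasDerivAt F (F' x) x) (hG' : ∀ x ∈ Ioo a b, HasDerivAt G (G' x) x)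
    (hle : ∀ x ∈ Ioo a b, F' x ≤ G' x) : F b - F a ≤ G b - G a := by
  have hmono : MonotoneOn (G - F) (Icc a b) := by
    refine monotoneOn_of_hasDerivWithinAt_nonneg (f' := G' - F') (convex_Icc a b) (hG.sub hF)
      (fun x hx => ?_) (fun x hx => ?_) <;> rw [interior_Icc] at hx
    · exact ((hG' x hx).sub (hF' x hx)).hasDerivWithinAt
    · exact sub_nonneg.2 (hle x hx)
  have hends := hmono (left_mem_Icc.2 hab) (right_mem_Icc.2 hab) hab
  simp only [Pi.sub_apply] at hends
  linarith

lemma abs_sub_le_sub_of_abs_hasDerivAt_le {F F' G G' : ℝ → ℝ} {a b : ℝ} (hab : a ≤ b)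
    (hF : ContinuousOn F (Icc a b)) (hG : ContinuousOn G (Icc a b))
    (hF' : ∀ x ∈ Ioo a b, HasDerivAt F (F' x) x) (hG' : ∀ x ∈ Ioo a b, HasDerivAt G (G' x) x)
    (hle : ∀ x ∈ Ioo a b, |F' x| ≤ G' x) : |F b - F a| ≤ G b - G a := by
  have hneg := sub_le_sub_of_hasDerivAt_le hab hF.neg hG (fun x hx => (hF' x hx).neg) hG'
    fun x hx => (neg_le_abs _).trans (hle x hx)
  have hpos := sub_le_sub_of_hasDerivAt_le hab hF hG hF' hG'
    fun x hx => (le_abs_self _).trans (hle x hx)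
  simp only [Pi.neg_apply] at hneg
  exact abs_le.2 ⟨by linarith, hpos⟩

/-- The regularity in which a Goursat problem is posed on `[a, a'] × [b, b']`: `z` is continuous
on the closed rectangle and, in its interior, `∂z/∂x = zx` and `∂zx/∂y = zxy`. The derivatives are
given as data, so that they can be combined without `deriv` of a non-differentiable function
intervening. -/
structure HasMixedDerivOn (z zx zxy : ℝ × ℝ → ℝ) (a a' b b' : ℝ) : Prop where
  continuousOn : ContinuousOn z (Icc a a' ×ˢ Icc b b')
  hasDerivAt_fst : ∀ x ∈ Ioo a a', ∀ y ∈ Ioo b b', HasDerivAt (fun t => z (t, y)) (zx (x, y)) x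
  hasDerivAt_snd : ∀ x ∈ Ioo a a', ∀ y ∈ Ioo b b', HasDerivAt (fun t => zx (x, t)) (zxy (x, y)) y

namespace HasMixedDerivOn

variable {z zx zxy w wx wxy : ℝ × ℝ → ℝ} {a a' b b' : ℝ}

lemma mono (hz : HasMixedDerivOn z zx zxy a a' b b') {c c' d d' : ℝ} (hc : a ≤ c) (hc' : c' ≤ a')
    (hd : b ≤ d) (hd' : d' ≤ b') : HasMixedDerivOn z zx zxy c c' d d' where
  continuousOn := hz.continuousOn.mono (prod_mono (Icc_subset_Icc hc hc') (Icc_subset_Icc hd hd'))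
  hasDerivAt_fst x hx y hy :=
    hz.hasDerivAt_fst x (Ioo_subset_Ioo hc hc' hx) y (Ioo_subset_Ioo hd hd' hy)
  hasDerivAt_snd x hx y hy :=
    hz.hasDerivAt_snd x (Ioo_subset_Ioo hc hc' hx) y (Ioo_subset_Ioo hd hd' hy)

lemma congr (hz : HasMixedDerivOn z zx zxy a a' b b') (hw : ∀ p, w p = z p)
    (hwxy : ∀ p, wxy p = zxy p) : HasMixedDerivOn w zx wxy a a' b b' := by
  rwa [funext hw, funext hwxy]

lemma const (c a a' b b' : ℝ) :
    HasMixedDerivOn (fun _ => c) (fun _ => 0) (fun _ => 0) a a' b b' where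
  continuousOn := continuousOn_const
  hasDerivAt_fst x _ _ _ := hasDerivAt_const x c
  hasDerivAt_snd _ _ y _ := hasDerivAt_const y 0

lemma add (hz : HasMixedDerivOn z zx zxy a a' b b') (hw : HasMixedDerivOn w wx wxy a a' b b') :
    HasMixedDerivOn (z + w) (zx + wx) (zxy + wxy) a a' b b' where
  continuousOn := hz.continuousOn.add hw.continuousOn
  hasDerivAt_fst x hx y hy := (hz.hasDerivAt_fst x hx y hy).add (hw.hasDerivAt_fst x hx y hy)
  hasDerivAt_snd x hx y hy := (hz.hasDerivAt_snd x hx y hy).add (hw.hasDerivAt_snd x hx y hy)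

lemma sub (hz : HasMixedDerivOn z zx zxy a a' b b') (hw : HasMixedDerivOn w wx wxy a a' b b') :
    HasMixedDerivOn (z - w) (zx - wx) (zxy - wxy) a a' b b' where
  continuousOn := hz.continuousOn.sub hw.continuousOn
  hasDerivAt_fst x hx y hy := (hz.hasDerivAt_fst x hx y hy).sub (hw.hasDerivAt_fst x hx y hy)
  hasDerivAt_snd x hx y hy := (hz.hasDerivAt_snd x hx y hy).sub (hw.hasDerivAt_snd x hx y hy)

lemma const_mul (c : ℝ) (hz : HasMixedDerivOn z zx zxy a a' b b') :
    HasMixedDerivOn (fun p => c * z p) (fun p => c * zx p) (fun p => c * zxy p) a a' b b' where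
  continuousOn := hz.continuousOn.const_mul c
  hasDerivAt_fst x hx y hy := (hz.hasDerivAt_fst x hx y hy).const_mul c
  hasDerivAt_snd x hx y hy := (hz.hasDerivAt_snd x hx y hy).const_mul c

lemma sum {ι : Type*} {s : Finset ι} {v vx vxy : ι → ℝ × ℝ → ℝ}
    (hv : ∀ i ∈ s, HasMixedDerivOn (v i) (vx i) (vxy i) a a' b b') :
    HasMixedDerivOn (fun p => ∑ i ∈ s, v i p) (fun p => ∑ i ∈ s, vx i p)
      (fun p => ∑ i ∈ s, vxy i p) a a' b b' where
  continuousOn := continuousOn_finsetSum s fun i hi => (hv i hi).continuousOn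
  hasDerivAt_fst x hx y hy := .fun_sum fun i hi => (hv i hi).hasDerivAt_fst x hx y hy
  hasDerivAt_snd x hx y hy := .fun_sum fun i hi => (hv i hi).hasDerivAt_snd x hx y hy

lemma mul_of_hasDerivAt {F F' G G' : ℝ → ℝ} (hF : ∀ x, HasDerivAt F (F' x) x)
    (hG : ∀ y, HasDerivAt G (G' y) y) (a a' b b' : ℝ) :
    HasMixedDerivOn (fun p => F p.1 * G p.2) (fun p => F' p.1 * G p.2)
      (fun p => F' p.1 * G' p.2) a a' b b' where
  continuousOn := by
    have hFc : Continuous F := continuous_iff_continuousAt.2 fun x => (hF x).continuousAt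
    have hGc : Continuous G := continuous_iff_continuousAt.2 fun y => (hG y).continuousAt
    fun_prop
  hasDerivAt_fst x _ y _ := (hF x).mul_const (G y)
  hasDerivAt_snd x _ y _ := (hG y).const_mul (F' x)

lemma sub_mul_sub (c d a a' b b' : ℝ) :
    HasMixedDerivOn (fun p => (p.1 - c) * (p.2 - d)) (fun p => p.2 - d) (fun _ => 1)
      a a' b b' := by
  simpa using mul_of_hasDerivAt (fun x => (hasDerivAt_id x).sub_const c)
    (fun y => (hasDerivAt_id y).sub_const d) a a' b b'

lemma abs_mixedDiff_le_of_mem_Ioo (hz : HasMixedDerivOn z zx zxy a a' b b')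
    (hw : HasMixedDerivOn w wx wxy a a' b b') (ha : a ≤ a')
    (hle : ∀ x ∈ Ioo a a', ∀ y ∈ Ioo b b', |zxy (x, y)| ≤ wxy (x, y)) {y₁ y₂ : ℝ}
    (hy₁ : y₁ ∈ Ioo b b') (hy₂ : y₂ ∈ Ioo b b') (hy : y₁ ≤ y₂) :
    |mixedDiff z a a' y₁ y₂| ≤ mixedDiff w a a' y₁ y₂ := by
  have hslice : ∀ {v : ℝ × ℝ → ℝ}, ContinuousOn v (Icc a a' ×ˢ Icc b b') → ∀ y ∈ Ioo b b',
      ContinuousOn (fun x => v (x, y)) (Icc a a') := fun hv y hy =>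
    hv.comp (by fun_prop) fun x hx => mk_mem_prod hx (Ioo_subset_Icc_self hy)
  have hsub : Icc y₁ y₂ ⊆ Ioo b b' := Icc_subset_Ioo hy₁.1 hy₂.2
  have hx_deriv : ∀ x ∈ Ioo a a',
      |zx (x, y₂) - zx (x, y₁)| ≤ wx (x, y₂) - wx (x, y₁) := fun x hx =>
    abs_sub_le_sub_of_abs_hasDerivAt_le (F := fun t => zx (x, t)) (G := fun t => wx (x, t)) hy
      (fun t ht => (hz.hasDerivAt_snd x hx t (hsub ht)).continuousAt.continuousWithinAt)
      (fun t ht => (hw.hasDerivAt_snd x hx t (hsub ht)).continuousAt.continuousWithinAt)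
      (fun t ht => hz.hasDerivAt_snd x hx t (hsub (Ioo_subset_Icc_self ht)))
      (fun t ht => hw.hasDerivAt_snd x hx t (hsub (Ioo_subset_Icc_self ht)))
      (fun t ht => hle x hx t (hsub (Ioo_subset_Icc_self ht)))
  have hmixed := abs_sub_le_sub_of_abs_hasDerivAt_le
    (F := fun x => z (x, y₂) - z (x, y₁)) (G := fun x => w (x, y₂) - w (x, y₁)) ha
    ((hslice hz.continuousOn y₂ hy₂).sub (hslice hz.continuousOn y₁ hy₁))
    ((hslice hw.continuousOn y₂ hy₂).sub (hslice hw.continuousOn y₁ hy₁))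
    (fun x hx => (hz.hasDerivAt_fst x hx y₂ hy₂).sub (hz.hasDerivAt_fst x hx y₁ hy₁))
    (fun x hx => (hw.hasDerivAt_fst x hx y₂ hy₂).sub (hw.hasDerivAt_fst x hx y₁ hy₁)) hx_deriv
  have hrearrange : ∀ v : ℝ × ℝ → ℝ, mixedDiff v a a' y₁ y₂ =
      v (a', y₂) - v (a', y₁) - (v (a, y₂) - v (a, y₁)) := fun v => by rw [mixedDiff]; ring
  rwa [hrearrange, hrearrange]

lemma continuousOn_mixedDiff (hz : HasMixedDerivOn z zx zxy a a' b b') (ha : a ≤ a') :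
    ContinuousOn (fun q : ℝ × ℝ => mixedDiff z a a' q.1 q.2) (Icc b b' ×ˢ Icc b b') := by
  have hcomp : ∀ x ∈ Icc a a', ∀ g : ℝ × ℝ → ℝ, Continuous g →
      MapsTo g (Icc b b' ×ˢ Icc b b') (Icc b b') →
      ContinuousOn (fun q => z (x, g q)) (Icc b b' ×ˢ Icc b b') := fun x hx g hg hmaps =>
    hz.continuousOn.comp (by fun_prop) fun q hq => mk_mem_prod hx (hmaps hq)
  have hfst : MapsTo Prod.fst (Icc b b' ×ˢ Icc b b') (Icc b b') := fun q hq => hq.1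
  have hsnd : MapsTo Prod.snd (Icc b b' ×ˢ Icc b b') (Icc b b') := fun q hq => hq.2
  have hl := left_mem_Icc.2 ha
  have hr := right_mem_Icc.2 ha
  exact (((hcomp a' hr _ continuous_snd hsnd).sub (hcomp a hl _ continuous_snd hsnd)).sub
    (hcomp a' hr _ continuous_fst hfst)).add (hcomp a hl _ continuous_fst hfst)

theorem abs_mixedDiff_le (hz : HasMixedDerivOn z zx zxy a a' b b')
    (hw : HasMixedDerivOn w wx wxy a a' b b') (ha : a ≤ a') (hb : b ≤ b')
    (hle : ∀ x ∈ Ioo a a', ∀ y ∈ Ioo b b', |zxy (x, y)| ≤ wxy (x, y)) :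
    |mixedDiff z a a' b b'| ≤ mixedDiff w a a' b b' := by
  obtain rfl | hlt := hb.eq_or_lt
  · simp [mixedDiff]
  obtain ⟨m, hbm, hmb'⟩ := exists_between hlt
  have hclosure : closure (Ioo b m ×ˢ Ioo m b') = Icc b m ×ˢ Icc m b' := by
    rw [closure_prod_eq, closure_Ioo hbm.ne, closure_Ioo hmb'.ne]
  have hsub : Icc b m ×ˢ Icc m b' ⊆ Icc b b' ×ˢ Icc b b' :=
    prod_mono (Icc_subset_Icc_right hmb'.le) (Icc_subset_Icc_left hbm.le)
  refine le_on_closure (s := Ioo b m ×ˢ Ioo m b') (f := fun q => |mixedDiff z a a' q.1 q.2|)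
    (g := fun q => mixedDiff w a a' q.1 q.2) (x := (b, b')) (fun q hq => ?_) ?_ ?_ ?_
  · exact hz.abs_mixedDiff_le_of_mem_Ioo hw ha hle ⟨hq.1.1, hq.1.2.trans hmb'⟩
      ⟨hbm.trans hq.2.1, hq.2.2⟩ (hq.1.2.trans hq.2.1).le
  · exact hclosure ▸ ((hz.continuousOn_mixedDiff ha).mono hsub).abs
  · exact hclosure ▸ (hw.continuousOn_mixedDiff ha).mono hsub
  · exact hclosure ▸ mk_mem_prod (left_mem_Icc.2 hbm.le) (right_mem_Icc.2 hmb'.le)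

lemma abs_mixedDiff_le_mul (hz : HasMixedDerivOn z zx zxy a a' b b') (ha : a ≤ a') (hb : b ≤ b')
    {C : ℝ} (hC : ∀ x ∈ Ioo a a', ∀ y ∈ Ioo b b', |zxy (x, y)| ≤ C) :
    |mixedDiff z a a' b b'| ≤ C * ((a' - a) * (b' - b)) := by
  have hle := hz.abs_mixedDiff_le ((sub_mul_sub a b a a' b b').const_mul C) ha hb
    (by simpa using hC)
  simpa [mixedDiff] using hle

end HasMixedDerivOn

end MixedDifference

section Gronwall

lemma hasDerivAt_sub_pow_succ_div_factorial (a x : ℝ) (k : ℕ) :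
    HasDerivAt (fun t => (t - a) ^ (k + 1) / ((k + 1).factorial : ℝ))
      ((x - a) ^ k / (k.factorial : ℝ)) x := by
  refine ((((hasDerivAt_id x).sub_const a).fun_pow (k + 1)).div_const _).congr_deriv ?_
  rw [Nat.factorial_succ]
  push_cast
  field_simp
  simp

/-- The `k`-th term of the Picard series solving `∂²w/∂x∂y = K w` with `w = 1` on the two sides
through the corner `(a, b)`; the series sums to `₀F₁(1; K (x - a) (y - b))`. -/
def picardTerm (K a b : ℝ) (k : ℕ) (p : ℝ × ℝ) : ℝ :=
  K ^ k * ((p.1 - a) ^ k / (k.factorial : ℝ) * ((p.2 - b) ^ k / (k.factorial : ℝ)))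

/-- What is left of the bound `M` on a function after `n` Picard iterations of
`w ↦ c + ∫∫ K w` from the corner `(a, b)`. -/
def picardMajorant (K c M a b : ℝ) (n : ℕ) (p : ℝ × ℝ) : ℝ :=
  c * ∑ k ∈ Finset.range n, picardTerm K a b k p + M * picardTerm K a b n p

variable {K M a a' b b' : ℝ}

lemma picardTerm_eq (K a b : ℝ) (k : ℕ) (p : ℝ × ℝ) :
    picardTerm K a b k p = (K * ((p.1 - a) * (p.2 - b))) ^ k / (k.factorial : ℝ) ^ 2 := by
  rw [picardTerm, mul_pow, mul_pow]
  ring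

lemma hasMixedDerivOn_picardTerm_succ (K a b : ℝ) (k : ℕ) (c c' d d' : ℝ) :
    ∃ wx, HasMixedDerivOn (picardTerm K a b (k + 1)) wx (fun p => K * picardTerm K a b k p)
      c c' d d' := by
  have hmono := (HasMixedDerivOn.mul_of_hasDerivAt
    (fun x => hasDerivAt_sub_pow_succ_div_factorial a x k)
    (fun y => hasDerivAt_sub_pow_succ_div_factorial b y k) c c' d d').const_mul (K ^ (k + 1))
  exact ⟨_, hmono.congr (fun _ => rfl) fun p => by rw [picardTerm, pow_succ']; ring⟩

lemma picardMajorant_succ (K c M a b : ℝ) (n : ℕ) (p : ℝ × ℝ) :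
    picardMajorant K c M a b (n + 1) p =
      c + (c * ∑ k ∈ Finset.range n, picardTerm K a b (k + 1) p +
        M * picardTerm K a b (n + 1) p) := by
  have hzero : picardTerm K a b 0 p = 1 := by simp [picardTerm]
  rw [picardMajorant, Finset.sum_range_succ', hzero]
  ring

lemma hasMixedDerivOn_picardMajorant_succ (K c M a b : ℝ) (n : ℕ) (e e' d d' : ℝ) :
    ∃ wx, HasMixedDerivOn (picardMajorant K c M a b (n + 1)) wx
      (fun p => K * picardMajorant K c M a b n p) e e' d d' := by
  choose wx hwx using fun k => hasMixedDerivOn_picardTerm_succ K a b k e e' d d'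
  have hsum := HasMixedDerivOn.sum (s := Finset.range n) fun k _ => hwx k
  have hmajorant := (HasMixedDerivOn.const c e e' d d').add
    ((hsum.const_mul c).add ((hwx n).const_mul M))
  refine ⟨_, hmajorant.congr (picardMajorant_succ K c M a b n) fun p => ?_⟩
  simp only [picardMajorant, Pi.add_apply, ← Finset.mul_sum]
  ring

lemma mixedDiff_picardMajorant_succ (K c M a b : ℝ) (n : ℕ) (x y : ℝ) :
    mixedDiff (picardMajorant K c M a b (n + 1)) a x b y =
      picardMajorant K c M a b (n + 1) (x, y) - c := by
  have hleft : ∀ (k : ℕ) (t : ℝ), picardTerm K a b (k + 1) (a, t) = 0 := by simp [picardTerm]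
  have hbottom : ∀ (k : ℕ) (t : ℝ), picardTerm K a b (k + 1) (t, b) = 0 := by simp [picardTerm]
  simp only [mixedDiff, picardMajorant_succ, hleft, hbottom, Finset.sum_const_zero]
  ring

lemma tendsto_picardMajorant (K c M a b : ℝ) (p : ℝ × ℝ) :
    Filter.Tendsto (fun n => picardMajorant K c M a b n p) Filter.atTop
      (nhds (c * hyp0F1 1 (K * ((p.1 - a) * (p.2 - b))))) := by
  have hseries := hasSum_hyp0F1_one (K * ((p.1 - a) * (p.2 - b)))
  simp only [picardMajorant, picardTerm_eq]
  simpa using (hseries.tendsto_sum_nat.const_mul c).add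
    (hseries.summable.tendsto_atTop_zero.const_mul M)

namespace HasMixedDerivOn

variable {z zx zxy : ℝ × ℝ → ℝ} {G c₀ : ℝ}

lemma abs_le_picardMajorant_succ (hz : HasMixedDerivOn z zx zxy a a' b b') (hG : 0 ≤ G)
    (hK : 0 ≤ K) (hle : ∀ p ∈ Ioo a a' ×ˢ Ioo b b', |zxy p| ≤ G + K * |z p|)
    (hside : ∀ x ∈ Icc a a', ∀ y ∈ Icc b b', |z (a, y) + z (x, b) - z (a, b)| ≤ c₀) {n : ℕ}
    (hn : ∀ p ∈ Icc a a' ×ˢ Icc b b',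
      |z p| ≤ picardMajorant K (c₀ + G * ((a' - a) * (b' - b))) M a b n p)
    {p : ℝ × ℝ} (hp : p ∈ Icc a a' ×ˢ Icc b b') :
    |z p| ≤ picardMajorant K (c₀ + G * ((a' - a) * (b' - b))) M a b (n + 1) p := by
  set c := c₀ + G * ((a' - a) * (b' - b))
  obtain ⟨x, y⟩ := p
  obtain ⟨hx, hy⟩ : x ∈ Icc a a' ∧ y ∈ Icc b b' := hp
  obtain ⟨wx, hw⟩ := hasMixedDerivOn_picardMajorant_succ K c M a b n a x b y
  have hsub : Ioo a x ×ˢ Ioo b y ⊆ Ioo a a' ×ˢ Ioo b b' :=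
    prod_mono (Ioo_subset_Ioo_right hx.2) (Ioo_subset_Ioo_right hy.2)
  have hcomparison := (hz.mono le_rfl hx.2 le_rfl hy.2).abs_mixedDiff_le
    (((sub_mul_sub a b a x b y).const_mul G).add hw) hx.1 hy.1 fun s hs t ht => by
      have hmem := hsub (mk_mem_prod hs ht)
      have hbound := hn (s, t) (prod_mono Ioo_subset_Icc_self Ioo_subset_Icc_self hmem)
      simpa using (hle (s, t) hmem).trans (by gcongr)
  have harea : G * ((x - a) * (y - b)) ≤ G * ((a' - a) * (b' - b)) := by
    have ha := sub_nonneg.2 (hx.1.trans hx.2)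
    have hyb := sub_nonneg.2 hy.1
    gcongr
    exacts [hx.2, hy.2]
  have hdiff : mixedDiff ((fun p : ℝ × ℝ => G * ((p.1 - a) * (p.2 - b))) +
      picardMajorant K c M a b (n + 1)) a x b y =
      G * ((x - a) * (y - b)) + (picardMajorant K c M a b (n + 1) (x, y) - c) := by
    rw [← mixedDiff_picardMajorant_succ]
    simp only [mixedDiff, Pi.add_apply]
    ring
  rw [hdiff] at hcomparison
  have hsplit : z (x, y) = mixedDiff z a x b y + (z (a, y) + z (x, b) - z (a, b)) := by
    rw [mixedDiff]; ring
  rw [hsplit]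
  refine (abs_add_le _ _).trans ?_
  linarith [hside x hx y hy]

theorem abs_le_mul_hyp0F1 (hz : HasMixedDerivOn z zx zxy a a' b b') (hG : 0 ≤ G)
    (hK : 0 ≤ K) (hle : ∀ p ∈ Ioo a a' ×ˢ Ioo b b', |zxy p| ≤ G + K * |z p|)
    (hside : ∀ x ∈ Icc a a', ∀ y ∈ Icc b b', |z (a, y) + z (x, b) - z (a, b)| ≤ c₀)
    {p : ℝ × ℝ} (hp : p ∈ Icc a a' ×ˢ Icc b b') :
    |z p| ≤ (c₀ + G * ((a' - a) * (b' - b))) * hyp0F1 1 (K * ((p.1 - a) * (p.2 - b))) := by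
  obtain ⟨M, hM⟩ := (isCompact_Icc.prod isCompact_Icc).bddAbove_image hz.continuousOn.abs
  have hiterate : ∀ n, ∀ q ∈ Icc a a' ×ˢ Icc b b',
      |z q| ≤ picardMajorant K (c₀ + G * ((a' - a) * (b' - b))) M a b n q := by
    intro n
    induction n with
    | zero =>
      intro q hq
      simpa [picardMajorant, picardTerm] using hM (mem_image_of_mem _ hq)
    | succ n ih => exact fun q hq => hz.abs_le_picardMajorant_succ hG hK hle hside ih hq
  exact ge_of_tendsto' (tendsto_picardMajorant K _ M a b p) fun n => hiterate n p hp

end HasMixedDerivOn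

end Gronwall

section Goursat

lemma abs_sub_le_biSup_abs_deriv_mul {F : ℝ → ℝ} {a b s t : ℝ} (hF : ContinuousOn F (Icc a b))
    (hF' : ∀ r ∈ Ioo a b, DifferentiableAt ℝ F r)
    (hbdd : BddAbove ((fun r => |deriv F r|) '' Ioo a b)) (has : a ≤ s) (hst : s ≤ t)
    (htb : t ≤ b) : |F t - F s| ≤ (⨆ r ∈ Ioo a b, |deriv F r|) * (t - s) := by
  have hsub : Ioo s t ⊆ Ioo a b := Ioo_subset_Ioo has htb
  have hle := abs_sub_le_sub_of_abs_hasDerivAt_le (G := fun r => (⨆ r ∈ Ioo a b, |deriv F r|) * r)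
    (G' := fun _ => ⨆ r ∈ Ioo a b, |deriv F r|) hst
    (hF.mono (Icc_subset_Icc has htb)) (by fun_prop)
    (fun r hr => (hF' r (hsub hr)).hasDerivAt)
    (fun r _ => by simpa using (hasDerivAt_id r).const_mul (⨆ r ∈ Ioo a b, |deriv F r|))
    (fun r hr => le_biSup_of_bddAbove_image (g := fun r => |deriv F r|) hbdd (hsub hr))
  rwa [mul_sub]

lemma isCompact_clD (X Y : ℝ) : IsCompact (clD X Y) := isCompact_Icc.prod isCompact_Icc

/-- The bound `sup|f| + N_α·sup|u|` that the Goursat equation gives for `∂²u/∂x∂y`; it is the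
quantity multiplied by `X` and `Y` in `constA`. -/
def pdxyBound (X Y : ℝ) (N : ℝ → ℝ) (f u : ℝ × ℝ → ℝ) : ℝ :=
  (⨆ p ∈ clD X Y, |f p|) + (⨆ p ∈ clD X Y, |N (u p)|) * ⨆ p ∈ clD X Y, |u p|

lemma pdxyBound_nonneg (X Y : ℝ) (N : ℝ → ℝ) (f u : ℝ × ℝ → ℝ) : 0 ≤ pdxyBound X Y N f u :=
  add_nonneg (biSup_abs_nonneg _ _) (mul_nonneg (biSup_abs_nonneg _ _) (biSup_abs_nonneg _ _))

namespace GoursatSol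

variable {X Y : ℝ} {N : ℝ → ℝ} {f : ℝ × ℝ → ℝ} {ψ φ : ℝ → ℝ} {u : ℝ × ℝ → ℝ}

lemma hasMixedDerivOn (hu : GoursatSol X Y N f ψ φ u) :
    HasMixedDerivOn u (pdx u) (pdxy u) 0 X 0 Y where
  continuousOn := hu.cont
  hasDerivAt_fst x hx y hy := (hu.diffx (x, y) ⟨hx, hy⟩).hasDerivAt
  hasDerivAt_snd x hx y hy := (hu.diffxy (x, y) ⟨hx, hy⟩).hasDerivAt

lemma abs_pdxy_le (hu : GoursatSol X Y N f ψ φ u) (hN : Continuous N)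
    (hf : ContinuousOn f (clD X Y)) {p : ℝ × ℝ} (hp : p ∈ opD X Y) :
    |pdxy u p| ≤ pdxyBound X Y N f u := by
  have hp' : p ∈ clD X Y := prod_mono Ioo_subset_Icc_self Ioo_subset_Icc_self hp
  have hbound_f := abs_le_biSup_abs_of_isCompact (isCompact_clD X Y) hf hp'
  have hbound_N := abs_le_biSup_abs_of_isCompact (isCompact_clD X Y)
    (hN.comp_continuousOn hu.cont) hp'
  have hbound_u := abs_le_biSup_abs_of_isCompact (isCompact_clD X Y) hu.cont hp'
  calc |pdxy u p| = |f p - N (u p) * u p| := by rw [← hu.eqn p hp, add_sub_cancel_right]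
    _ ≤ |f p| + |N (u p)| * |u p| := (abs_sub _ _).trans_eq (by rw [abs_mul])
    _ ≤ pdxyBound X Y N f u := by
      refine add_le_add hbound_f (mul_le_mul hbound_N hbound_u (abs_nonneg _) ?_)
      exact biSup_abs_nonneg _ _

lemma continuousOn_bottom (hu : GoursatSol X Y N f ψ φ u) (hY : 0 ≤ Y) :
    ContinuousOn ψ (Icc 0 X) :=
  (hu.cont.comp (f := fun x => (x, 0)) (by fun_prop)
    fun _ hx => mk_mem_prod hx (left_mem_Icc.2 hY)).congr fun x hx => (hu.bc1 x hx).symm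

lemma continuousOn_left (hu : GoursatSol X Y N f ψ φ u) (hX : 0 ≤ X) :
    ContinuousOn φ (Icc 0 Y) :=
  (hu.cont.comp (f := fun y => (0, y)) (by fun_prop)
    fun _ hy => mk_mem_prod (left_mem_Icc.2 hX) hy).congr fun y hy => (hu.bc2 y hy).symm

lemma abs_mixedDiff_le (hu : GoursatSol X Y N f ψ φ u) (hN : Continuous N)
    (hf : ContinuousOn f (clD X Y)) {a a' b b' : ℝ} (ha : 0 ≤ a) (haa' : a ≤ a') (ha' : a' ≤ X)
    (hb : 0 ≤ b) (hbb' : b ≤ b') (hb' : b' ≤ Y) :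
    |mixedDiff u a a' b b'| ≤ pdxyBound X Y N f u * ((a' - a) * (b' - b)) :=
  (hu.hasMixedDerivOn.mono ha ha' hb hb').abs_mixedDiff_le_mul haa' hbb' fun _ hx _ hy =>
    hu.abs_pdxy_le hN hf (mk_mem_prod (Ioo_subset_Ioo ha ha' hx) (Ioo_subset_Ioo hb hb' hy))

variable (hu : GoursatSol X Y N f ψ φ u) (hN : Continuous N) (hf : ContinuousOn f (clD X Y))
  (hψd : ∀ x ∈ Ioo 0 X, DifferentiableAt ℝ ψ x) (hφd : ∀ y ∈ Ioo 0 Y, DifferentiableAt ℝ φ y)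
  (hbψ : BddAbove ((fun x => |deriv ψ x|) '' Ioo 0 X))
  (hbφ : BddAbove ((fun y => |deriv φ y|) '' Ioo 0 Y))
  {x x' y y' : ℝ} (hx' : 0 ≤ x') (hxx' : x' ≤ x) (hx : x ≤ X) (hy' : 0 ≤ y') (hyy' : y' ≤ y)
  (hy : y ≤ Y)
include hu hN hf hψd hφd hbψ hbφ hx' hxx' hx hy' hyy' hy

lemma abs_sub_le :
    |u (x, y) - u (x', y')| ≤
      ((⨆ x ∈ Ioo (0 : ℝ) X, |deriv ψ x|) + Y * pdxyBound X Y N f u) * (x - x') +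
        ((⨆ y ∈ Ioo (0 : ℝ) Y, |deriv φ y|) + X * pdxyBound X Y N f u) * (y - y') := by
  have hy₀ := hy'.trans hyy'
  have hx₀ := hxx'.trans hx
  have hψ := abs_sub_le_biSup_abs_deriv_mul (hu.continuousOn_bottom (hy₀.trans hy)) hψd hbψ
    hx' hxx' hx
  have hφ := abs_sub_le_biSup_abs_deriv_mul (hu.continuousOn_left (hx'.trans hx₀)) hφd hbφ
    hy' hyy' hy
  have hbelow := hu.abs_mixedDiff_le hN hf hx' hxx' hx le_rfl hy₀ hy
  have hleft := hu.abs_mixedDiff_le hN hf le_rfl hx' hx₀ hy' hyy' hy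
  have hdecompose : u (x, y) - u (x', y') =
      ψ x - ψ x' + (φ y - φ y') + mixedDiff u x' x 0 y + mixedDiff u 0 x' y' y := by
    rw [← hu.bc1 x ⟨hx'.trans hxx', hx⟩, ← hu.bc1 x' ⟨hx', hx₀⟩, ← hu.bc2 y ⟨hy₀, hy⟩,
      ← hu.bc2 y' ⟨hy', hyy'.trans hy⟩, mixedDiff, mixedDiff]
    ring
  have hC := pdxyBound_nonneg X Y N f u
  set C := pdxyBound X Y N f u
  have hbelow' : C * ((x - x') * (y - 0)) ≤ Y * C * (x - x') := by
    have := mul_le_mul_of_nonneg_left hy (mul_nonneg hC (sub_nonneg.2 hxx'))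
    linarith
  have hleft' : C * ((x' - 0) * (y - y')) ≤ X * C * (y - y') := by
    have := mul_le_mul_of_nonneg_left hx₀ (mul_nonneg hC (sub_nonneg.2 hyy'))
    linarith
  rw [hdecompose]
  refine (abs_add_le _ _).trans ?_
  linarith [abs_add_three (ψ x - ψ x') (φ y - φ y') (mixedDiff u x' x 0 y)]

lemma abs_sub_le_sqrt_mul_constA :
    |u (x, y) - u (x', y')| ≤
      √((x - x') ^ 2 + (y - y') ^ 2) * constA X Y N f ψ φ u := by
  have hcauchySchwarz := Real.sum_mul_le_sqrt_mul_sqrt Finset.univ ![x - x', y - y']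
    ![(⨆ x ∈ Ioo (0 : ℝ) X, |deriv ψ x|) + Y * pdxyBound X Y N f u,
      (⨆ y ∈ Ioo (0 : ℝ) Y, |deriv φ y|) + X * pdxyBound X Y N f u]
  simp only [Fin.sum_univ_two, Matrix.cons_val_zero, Matrix.cons_val_one] at hcauchySchwarz
  refine (hu.abs_sub_le hN hf hψd hφd hbψ hbφ hx' hxx' hx hy' hyy' hy).trans ?_
  rwa [mul_comm _ (x - x'), mul_comm _ (y - y')]

end GoursatSol

end Goursat

section Mesh

variable {X Y : ℝ} {N₁ N₂ i j : ℕ} {p : ℝ × ℝ}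

lemma meshInterval_bounds (hX : 0 ≤ X) (hi : i ∈ Finset.Icc 1 N₁) :
    0 ≤ ((i : ℝ) - 1) * (X / N₁) ∧ (i : ℝ) * (X / N₁) ≤ X := by
  obtain ⟨h1i, hiN⟩ := Finset.mem_Icc.1 hi
  have hone : (1 : ℝ) ≤ i := by exact_mod_cast h1i
  refine ⟨mul_nonneg (sub_nonneg.2 hone) (by positivity), ?_⟩
  calc (i : ℝ) * (X / N₁) ≤ N₁ * (X / N₁) := by gcongr
    _ = X := mul_div_cancel₀ X (Nat.cast_ne_zero.2 (by lia))

lemma sub_one_mul_le_mul {h : ℝ} (hh : 0 ≤ h) (t : ℝ) : (t - 1) * h ≤ t * h := by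
  linarith

lemma cellOp_subset_opD (hX : 0 ≤ X) (hY : 0 ≤ Y) (hi : i ∈ Finset.Icc 1 N₁)
    (hj : j ∈ Finset.Icc 1 N₂) : cellOp X Y N₁ N₂ i j ⊆ opD X Y :=
  have hxi := meshInterval_bounds hX hi
  have hyj := meshInterval_bounds hY hj
  prod_mono (Ioo_subset_Ioo hxi.1 hxi.2) (Ioo_subset_Ioo hyj.1 hyj.2)

lemma cellCl_subset_clD (hX : 0 ≤ X) (hY : 0 ≤ Y) (hi : i ∈ Finset.Icc 1 N₁)
    (hj : j ∈ Finset.Icc 1 N₂) : cellCl X Y N₁ N₂ i j ⊆ clD X Y :=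
  have hxi := meshInterval_bounds hX hi
  have hyj := meshInterval_bounds hY hj
  prod_mono (Icc_subset_Icc hxi.1 hxi.2) (Icc_subset_Icc hyj.1 hyj.2)

lemma cellOp_subset_cellCl (X Y : ℝ) (N₁ N₂ i j : ℕ) :
    cellOp X Y N₁ N₂ i j ⊆ cellCl X Y N₁ N₂ i j :=
  prod_mono Ioo_subset_Icc_self Ioo_subset_Icc_self

lemma meshNode_mem_cellCl (hX : 0 ≤ X) (hY : 0 ≤ Y) (N₁ N₂ i j : ℕ) :
    meshNode X Y N₁ N₂ i j ∈ cellCl X Y N₁ N₂ i j :=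
  mk_mem_prod (left_mem_Icc.2 (sub_one_mul_le_mul (by positivity) _))
    (left_mem_Icc.2 (sub_one_mul_le_mul (by positivity) _))

lemma isCompact_cellCl (X Y : ℝ) (N₁ N₂ i j : ℕ) : IsCompact (cellCl X Y N₁ N₂ i j) :=
  isCompact_Icc.prod isCompact_Icc

variable {z : ℝ × ℝ → ℝ}

lemma znorm_nonneg (X Y : ℝ) (N₁ N₂ : ℕ) (z : ℝ × ℝ → ℝ) (i j : ℕ) :
    0 ≤ znorm X Y N₁ N₂ z i j := by
  rw [znorm]
  split_ifs
  exacts [le_rfl, biSup_abs_nonneg _ _]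

lemma znorm_le {C : ℝ} (hC : 0 ≤ C) (hz : ∀ p ∈ cellCl X Y N₁ N₂ i j, |z p| ≤ C) :
    znorm X Y N₁ N₂ z i j ≤ C := by
  rw [znorm]
  split_ifs
  exacts [hC, Real.iSup_le (fun p => Real.iSup_le (hz p) hC) hC]

lemma abs_le_znorm (hX : 0 ≤ X) (hY : 0 ≤ Y) (hz : ContinuousOn z (clD X Y))
    (hi : i ∈ Finset.Icc 1 N₁) (hj : j ∈ Finset.Icc 1 N₂) (hp : p ∈ cellCl X Y N₁ N₂ i j) :
    |z p| ≤ znorm X Y N₁ N₂ z i j := by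
  rw [znorm, if_neg (by grind)]
  exact abs_le_biSup_abs_of_isCompact (isCompact_cellCl X Y N₁ N₂ i j)
    (hz.mono (cellCl_subset_clD hX hY hi hj)) hp

lemma abs_meshNode_le_znorm_pred (hX : 0 ≤ X) (hY : 0 ≤ Y) (hz : ContinuousOn z (clD X Y))
    (hleft : ∀ y ∈ Icc 0 Y, z (0, y) = 0) (hi : i ∈ Finset.Icc 1 N₁)
    (hj : j ∈ Finset.Icc 1 N₂) :
    |z (meshNode X Y N₁ N₂ i j)| ≤ znorm X Y N₁ N₂ z (i - 1) j := by
  have hnode := meshNode_mem_cellCl hX hY N₁ N₂ i j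
  obtain ⟨k, rfl⟩ := Nat.exists_eq_add_of_le' (Finset.mem_Icc.1 hi).1
  obtain rfl | hk := k.eq_zero_or_pos
  · have hzero : z (meshNode X Y N₁ N₂ (0 + 1) j) = 0 := by
      simpa [meshNode] using hleft _ (cellCl_subset_clD hX hY hi hj hnode).2
    simpa [hzero] using znorm_nonneg X Y N₁ N₂ z _ j
  · refine abs_le_znorm hX hY hz (by grind) hj (mk_mem_prod ?_ hnode.2)
    simpa using sub_one_mul_le_mul (div_nonneg hX N₁.cast_nonneg) (k : ℝ)

lemma abs_bottom_le_znorm_pred (hX : 0 ≤ X) (hY : 0 ≤ Y) (hz : ContinuousOn z (clD X Y))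
    (hbottom : ∀ x ∈ Icc 0 X, z (x, 0) = 0) (hi : i ∈ Finset.Icc 1 N₁)
    (hj : j ∈ Finset.Icc 1 N₂) {x : ℝ}
    (hx : x ∈ Icc (((i : ℝ) - 1) * (X / N₁)) ((i : ℝ) * (X / N₁))) :
    |z (x, ((j : ℝ) - 1) * (Y / N₂))| ≤ znorm X Y N₁ N₂ z i (j - 1) := by
  have hxi := meshInterval_bounds hX hi
  obtain ⟨l, rfl⟩ := Nat.exists_eq_add_of_le' (Finset.mem_Icc.1 hj).1
  obtain rfl | hl := l.eq_zero_or_pos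
  · simpa [hbottom x (Icc_subset_Icc hxi.1 hxi.2 hx)] using znorm_nonneg X Y N₁ N₂ z i _
  · refine abs_le_znorm hX hY hz hi (by grind) (mk_mem_prod hx ?_)
    simpa using sub_one_mul_le_mul (div_nonneg hY N₂.cast_nonneg) (l : ℝ)

end Mesh

section Coefficients

variable {X Y : ℝ} {N₁ N₂ i j : ℕ} {N : ℝ → ℝ} {u u0 : ℝ × ℝ → ℝ} {p : ℝ × ℝ}

lemma coefN_nonneg (X Y : ℝ) (N₁ N₂ : ℕ) (N : ℝ → ℝ) (u0 : ℝ × ℝ → ℝ) (i j : ℕ) :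
    0 ≤ coefN X Y N₁ N₂ N u0 i j :=
  abs_nonneg _

lemma coefL_nonneg (X Y : ℝ) (N₁ N₂ : ℕ) (N : ℝ → ℝ) (u u0 : ℝ × ℝ → ℝ) (i j : ℕ) :
    0 ≤ coefL X Y N₁ N₂ N u u0 i j :=
  Real.iSup_nonneg fun _ => Real.iSup_nonneg fun _ => biSup_abs_nonneg _ _

lemma abs_deriv_le_coefL (hN : ContDiff ℝ 1 fun v => N v * v)
    (hu : ContinuousOn u (cellCl X Y N₁ N₂ i j)) (hp : p ∈ cellCl X Y N₁ N₂ i j) {v : ℝ}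
    (hv : v ∈ segment ℝ (u0 (meshNode X Y N₁ N₂ i j)) (u p)) :
    |deriv (fun v => N v * v) v| ≤ coefL X Y N₁ N₂ N u u0 i j := by
  rw [segment_eq_image'] at hv
  obtain ⟨θ, hθ, hv⟩ := hv
  have hline : v =
      u0 (meshNode X Y N₁ N₂ i j) - θ * (u0 (meshNode X Y N₁ N₂ i j) - u p) := by
    simp only [← hv, smul_eq_mul]; ring
  have hu' : ContinuousOn (fun q : (ℝ × ℝ) × ℝ => u q.1) (cellCl X Y N₁ N₂ i j ×ˢ Icc 0 1) :=
    hu.comp continuousOn_fst fun _ hq => hq.1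
  rw [hline]
  refine le_biSup_biSup_of_isCompact (isCompact_cellCl X Y N₁ N₂ i j) isCompact_Icc
    (g := fun q θ => |deriv (fun v => N v * v) (u0 (meshNode X Y N₁ N₂ i j) -
      θ * (u0 (meshNode X Y N₁ N₂ i j) - u q))|) ?_ hp hθ
  exact ((hN.continuous_deriv le_rfl).comp_continuousOn
    (continuousOn_const.sub (continuousOn_snd.mul (continuousOn_const.sub hu')))).abs

lemma abs_mul_sub_mul_le_coefL_mul (hN : ContDiff ℝ 1 fun v => N v * v)
    (hu : ContinuousOn u (cellCl X Y N₁ N₂ i j)) (hp : p ∈ cellCl X Y N₁ N₂ i j) :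
    |N (u p) * u p - N (u0 (meshNode X Y N₁ N₂ i j)) * u0 (meshNode X Y N₁ N₂ i j)| ≤
      coefL X Y N₁ N₂ N u u0 i j * |u p - u0 (meshNode X Y N₁ N₂ i j)| :=
  Convex.norm_image_sub_le_of_norm_deriv_le (fun v _ => hN.differentiable one_ne_zero v)
    (fun _ hv => abs_deriv_le_coefL hN hu hp hv) (convex_segment _ _) (left_mem_segment ℝ _ _)
    (right_mem_segment ℝ _ _)

lemma hyp0F1_le_coefR (N : ℝ → ℝ) (u0 : ℝ × ℝ → ℝ) (hp : p ∈ cellCl X Y N₁ N₂ i j) :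
    hyp0F1 1 (coefN X Y N₁ N₂ N u0 i j *
        ((p.1 - ((i : ℝ) - 1) * (X / N₁)) * (p.2 - ((j : ℝ) - 1) * (Y / N₂)))) ≤
      coefR X Y N₁ N₂ N u0 i j := by
  have hNc := coefN_nonneg X Y N₁ N₂ N u0 i j
  have hx := sub_nonneg.2 hp.1.1
  have hy := sub_nonneg.2 hp.2.1
  have hx' : p.1 - ((i : ℝ) - 1) * (X / N₁) ≤ X / N₁ := by linarith [hp.1.2]
  have hwidth := hx.trans hx'
  have hy' : p.2 - ((j : ℝ) - 1) * (Y / N₂) ≤ Y / N₂ := by linarith [hp.2.2]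
  rw [coefR, mul_assoc _ (X / _)]
  refine hyp0F1_le_hyp0F1 one_pos (by positivity) ?_
  gcongr

lemma coefR_le_one_add_coefR' (hX : 0 ≤ X) (hY : 0 ≤ Y) (N₁ N₂ : ℕ) (N : ℝ → ℝ)
    (u0 : ℝ × ℝ → ℝ) (i j : ℕ) :
    coefR X Y N₁ N₂ N u0 i j ≤ 1 + X / N₁ * (Y / N₂) * coefR' X Y N₁ N₂ N u0 i j := by
  have hNc := coefN_nonneg X Y N₁ N₂ N u0 i j
  have hle := hyp0F1_le_one_add (w := coefN X Y N₁ N₂ N u0 i j * (X / N₁) * (Y / N₂)) one_pos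
    (by positivity)
  rw [one_add_one_eq_two, div_one] at hle
  rw [coefR, coefR']
  linarith

end Coefficients

section ErrorEstimate

/-- A bound for `|∂²(u - u⁰)/∂x∂y|` on the cell `P_{i,j}` when `|u - u(x_{i-1}, y_{j-1})| ≤ h A`
there: the summand of the estimate, with `A` in place of `constA`. -/
def cellSource (X Y : ℝ) (N₁ N₂ : ℕ) (N : ℝ → ℝ) (u u0 : ℝ × ℝ → ℝ) (A : ℝ) (i j : ℕ) : ℝ :=
  (2 * coefN X Y N₁ N₂ N u0 i j + coefL X Y N₁ N₂ N u u0 i j) *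
      znorm X Y N₁ N₂ (fun p => u p - u0 p) i j +
    meshH X Y N₁ N₂ * (coefN X Y N₁ N₂ N u0 i j + coefL X Y N₁ N₂ N u u0 i j) * A

variable {X Y : ℝ} {N : ℝ → ℝ} {f : ℝ × ℝ → ℝ} {ψ φ : ℝ → ℝ} {N₁ N₂ i j : ℕ}
  {u u0 : ℝ × ℝ → ℝ} {A : ℝ}

lemma cellSource_nonneg (hA : 0 ≤ meshH X Y N₁ N₂ * A) (N : ℝ → ℝ) (u u0 : ℝ × ℝ → ℝ) (i j : ℕ) :
    0 ≤ cellSource X Y N₁ N₂ N u u0 A i j := by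
  have hNc := coefN_nonneg X Y N₁ N₂ N u0 i j
  have hL := coefL_nonneg X Y N₁ N₂ N u u0 i j
  have hz := znorm_nonneg X Y N₁ N₂ (fun p => u p - u0 p) i j
  rw [cellSource, mul_right_comm]
  positivity

lemma GoursatSol.sub_basicSol_bottom (hu : GoursatSol X Y N f ψ φ u)
    (hu0 : BasicSol X Y N f ψ φ N₁ N₂ u0) : ∀ x ∈ Icc 0 X, u (x, 0) - u0 (x, 0) = 0 :=
  fun x hx => sub_eq_zero.2 ((hu.bc1 x hx).trans (hu0.bc1 x hx).symm)

lemma GoursatSol.sub_basicSol_left (hu : GoursatSol X Y N f ψ φ u)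
    (hu0 : BasicSol X Y N f ψ φ N₁ N₂ u0) : ∀ y ∈ Icc 0 Y, u (0, y) - u0 (0, y) = 0 :=
  fun y hy => sub_eq_zero.2 ((hu.bc2 y hy).trans (hu0.bc2 y hy).symm)

lemma BasicSol.hasMixedDerivOn (hX : 0 ≤ X) (hY : 0 ≤ Y) (hu0 : BasicSol X Y N f ψ φ N₁ N₂ u0)
    (hi : i ∈ Finset.Icc 1 N₁) (hj : j ∈ Finset.Icc 1 N₂) :
    HasMixedDerivOn u0 (pdx u0) (pdxy u0) (((i : ℝ) - 1) * (X / N₁)) ((i : ℝ) * (X / N₁))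
      (((j : ℝ) - 1) * (Y / N₂)) ((j : ℝ) * (Y / N₂)) where
  continuousOn := hu0.cont.mono (cellCl_subset_clD hX hY hi hj)
  hasDerivAt_fst x hx y hy := (hu0.diffx i hi j hj (x, y) ⟨hx, hy⟩).hasDerivAt
  hasDerivAt_snd x hx y hy := (hu0.diffxy i hi j hj (x, y) ⟨hx, hy⟩).hasDerivAt

lemma GoursatSol.abs_sub_meshNode_le (hX : 0 ≤ X) (hY : 0 ≤ Y)
    (hu : GoursatSol X Y N f ψ φ u) (hN : Continuous N) (hf : ContinuousOn f (clD X Y))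
    (hψd : ∀ x ∈ Ioo 0 X, DifferentiableAt ℝ ψ x) (hφd : ∀ y ∈ Ioo 0 Y, DifferentiableAt ℝ φ y)
    (hbψ : BddAbove ((fun x => |deriv ψ x|) '' Ioo 0 X))
    (hbφ : BddAbove ((fun y => |deriv φ y|) '' Ioo 0 Y))
    (hi : i ∈ Finset.Icc 1 N₁) (hj : j ∈ Finset.Icc 1 N₂) {p : ℝ × ℝ}
    (hp : p ∈ cellCl X Y N₁ N₂ i j) :
    |u p - u (meshNode X Y N₁ N₂ i j)| ≤ meshH X Y N₁ N₂ * constA X Y N f ψ φ u := by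
  obtain ⟨⟨hx, hx'⟩, hy, hy'⟩ := hp
  have hxi := meshInterval_bounds hX hi
  have hyj := meshInterval_bounds hY hj
  refine (hu.abs_sub_le_sqrt_mul_constA hN hf hψd hφd hbψ hbφ hxi.1 hx (hx'.trans hxi.2) hyj.1 hy
    (hy'.trans hyj.2)).trans (mul_le_mul_of_nonneg_right (Real.sqrt_le_sqrt ?_)
      (Real.sqrt_nonneg _))
  gcongr <;> linarith

variable (hX : 0 ≤ X) (hY : 0 ≤ Y) (hN : ContDiff ℝ 1 N)
  (hu : GoursatSol X Y N f ψ φ u) (hu0 : BasicSol X Y N f ψ φ N₁ N₂ u0)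
  (hosc : ∀ i ∈ Finset.Icc 1 N₁, ∀ j ∈ Finset.Icc 1 N₂, ∀ p ∈ cellCl X Y N₁ N₂ i j,
    |u p - u (meshNode X Y N₁ N₂ i j)| ≤ meshH X Y N₁ N₂ * A)
  (hi : i ∈ Finset.Icc 1 N₁) (hj : j ∈ Finset.Icc 1 N₂)
include hX hY hu hu0 hi hj

lemma hasMixedDerivOn_sub :
    HasMixedDerivOn (fun p => u p - u0 p) (pdx u - pdx u0) (pdxy u - pdxy u0)
      (((i : ℝ) - 1) * (X / N₁)) ((i : ℝ) * (X / N₁))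
      (((j : ℝ) - 1) * (Y / N₂)) ((j : ℝ) * (Y / N₂)) :=
  have hxi := meshInterval_bounds hX hi
  have hyj := meshInterval_bounds hY hj
  (hu.hasMixedDerivOn.mono hxi.1 hxi.2 hyj.1 hyj.2).sub (hu0.hasMixedDerivOn hX hY hi hj)

include hN hosc

omit hN hu hu0 in
lemma meshH_mul_nonneg_of_osc_le : 0 ≤ meshH X Y N₁ N₂ * A :=
  (abs_nonneg _).trans (hosc i hi j hj _ (meshNode_mem_cellCl hX hY N₁ N₂ i j))

lemma abs_pdxy_sub_le {p : ℝ × ℝ} (hp : p ∈ cellOp X Y N₁ N₂ i j) :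
    |pdxy u p - pdxy u0 p| ≤
      (coefN X Y N₁ N₂ N u0 i j + coefL X Y N₁ N₂ N u u0 i j) *
          (|u (meshNode X Y N₁ N₂ i j) - u0 (meshNode X Y N₁ N₂ i j)| + meshH X Y N₁ N₂ * A) +
        coefN X Y N₁ N₂ N u0 i j * |u p - u0 p| := by
  have hp' := cellOp_subset_cellCl X Y N₁ N₂ i j hp
  have hmeanValue := abs_mul_sub_mul_le_coefL_mul (u0 := u0) (hN.mul contDiff_id)
    (hu.cont.mono (cellCl_subset_clD hX hY hi hj)) hp'
  have hosc_p := hosc i hi j hj p hp'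
  have hequ := hu.eqn p (cellOp_subset_opD hX hY hi hj hp)
  have hequ0 := hu0.eqn i hi j hj p hp
  have hL := coefL_nonneg X Y N₁ N₂ N u u0 i j
  rw [coefN]
  set q := meshNode X Y N₁ N₂ i j
  set L := coefL X Y N₁ N₂ N u u0 i j
  have hsplit : pdxy u p - pdxy u0 p = N (u0 q) * (u p - u0 q) -
      (N (u p) * u p - N (u0 q) * u0 q) - N (u0 q) * (u p - u0 p) := by
    linear_combination hequ - hequ0
  calc |pdxy u p - pdxy u0 p|
      ≤ |N (u0 q)| * |u p - u0 q| + |N (u p) * u p - N (u0 q) * u0 q| +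
          |N (u0 q)| * |u p - u0 p| := by
        rw [hsplit, ← abs_mul, ← abs_mul]
        exact (abs_sub _ _).trans (add_le_add_left (abs_sub _ _) _)
    _ ≤ (|N (u0 q)| + L) * |u p - u0 q| + |N (u0 q)| * |u p - u0 p| := by linarith
    _ ≤ _ := by
        gcongr
        exact (abs_sub_le (u p) (u q) (u0 q)).trans (by linarith)

lemma abs_pdxy_sub_le_cellSource {p : ℝ × ℝ} (hp : p ∈ cellOp X Y N₁ N₂ i j) :
    |pdxy u p - pdxy u0 p| ≤ cellSource X Y N₁ N₂ N u u0 A i j := by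
  have hz : ContinuousOn (fun p => u p - u0 p) (clD X Y) := hu.cont.sub hu0.cont
  have hznorm : ∀ q ∈ cellCl X Y N₁ N₂ i j,
      |u q - u0 q| ≤ znorm X Y N₁ N₂ (fun p => u p - u0 p) i j := fun q hq =>
    abs_le_znorm hX hY hz hi hj hq
  have hNc := coefN_nonneg X Y N₁ N₂ N u0 i j
  have hL := coefL_nonneg X Y N₁ N₂ N u u0 i j
  calc |pdxy u p - pdxy u0 p|
      ≤ (coefN X Y N₁ N₂ N u0 i j + coefL X Y N₁ N₂ N u u0 i j) *
          (znorm X Y N₁ N₂ (fun p => u p - u0 p) i j + meshH X Y N₁ N₂ * A) +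
        coefN X Y N₁ N₂ N u0 i j * znorm X Y N₁ N₂ (fun p => u p - u0 p) i j := by
        refine (abs_pdxy_sub_le hX hY hN hu hu0 hosc hi hj hp).trans ?_
        gcongr
        exacts [hznorm _ (meshNode_mem_cellCl hX hY N₁ N₂ i j),
          hznorm p (cellOp_subset_cellCl X Y N₁ N₂ i j hp)]
    _ = cellSource X Y N₁ N₂ N u u0 A i j := by rw [cellSource]; ring

lemma abs_mixedDiff_sub_le_cellSource {y : ℝ}
    (hy : y ∈ Icc (((j : ℝ) - 1) * (Y / N₂)) ((j : ℝ) * (Y / N₂))) :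
    |mixedDiff (fun p => u p - u0 p) (((i : ℝ) - 1) * (X / N₁)) ((i : ℝ) * (X / N₁))
        (((j : ℝ) - 1) * (Y / N₂)) y| ≤
      X / N₁ * (Y / N₂) * cellSource X Y N₁ N₂ N u u0 A i j := by
  have hsource := cellSource_nonneg
    (meshH_mul_nonneg_of_osc_le hX hY hosc hi hj) N u u0 i j
  have hle := ((hasMixedDerivOn_sub hX hY hu hu0 hi hj).mono le_rfl le_rfl le_rfl
    hy.2).abs_mixedDiff_le_mul (sub_one_mul_le_mul (by positivity) _) hy.1 fun x hx t ht =>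
      abs_pdxy_sub_le_cellSource hX hY hN hu hu0 hosc hi hj
        (mk_mem_prod hx (Ioo_subset_Ioo_right hy.2 ht))
  have hwidth : (i : ℝ) * (X / N₁) - ((i : ℝ) - 1) * (X / N₁) = X / N₁ := by ring
  have hheight : y - ((j : ℝ) - 1) * (Y / N₂) ≤ Y / N₂ := by linarith [hy.2]
  rw [hwidth] at hle
  rw [mul_comm (_ * _)]
  refine hle.trans ?_
  gcongr

omit hi in
lemma abs_mixedDiff_sub_row_le {k : ℕ} (hk : k ≤ N₁) {y : ℝ}
    (hy : y ∈ Icc (((j : ℝ) - 1) * (Y / N₂)) ((j : ℝ) * (Y / N₂))) :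
    |mixedDiff (fun p => u p - u0 p) 0 (k * (X / N₁)) (((j : ℝ) - 1) * (Y / N₂)) y| ≤
      X / N₁ * (Y / N₂) * ∑ s ∈ Finset.Icc 1 k, cellSource X Y N₁ N₂ N u u0 A s j := by
  have hcell : ∀ s ∈ Finset.range k,
      |mixedDiff (fun p => u p - u0 p) (s * (X / N₁)) ((s + 1 : ℕ) * (X / N₁))
          (((j : ℝ) - 1) * (Y / N₂)) y| ≤
        X / N₁ * (Y / N₂) * cellSource X Y N₁ N₂ N u u0 A (s + 1) j := fun s hs => by
    have hs' : s + 1 ∈ Finset.Icc 1 N₁ := by grind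
    simpa using abs_mixedDiff_sub_le_cellSource hX hY hN hu hu0 hosc hs' hj hy
  have htelescope := abs_mixedDiff_le_sum (fun p => u p - u0 p) (fun s : ℕ => s * (X / N₁))
    (((j : ℝ) - 1) * (Y / N₂)) y k
  rw [Nat.cast_zero, zero_mul] at htelescope
  refine htelescope.trans ((Finset.sum_le_sum hcell).trans_eq ?_)
  rw [← Finset.mul_sum, Finset.range_eq_Ico,
    Finset.sum_Ico_add' (fun s => cellSource X Y N₁ N₂ N u u0 A s j), zero_add,
    Finset.Ico_add_one_right_eq_Icc]

lemma abs_sub_sides_le {x y : ℝ}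
    (hx : x ∈ Icc (((i : ℝ) - 1) * (X / N₁)) ((i : ℝ) * (X / N₁)))
    (hy : y ∈ Icc (((j : ℝ) - 1) * (Y / N₂)) ((j : ℝ) * (Y / N₂))) :
    |u (((i : ℝ) - 1) * (X / N₁), y) - u0 (((i : ℝ) - 1) * (X / N₁), y) +
        (u (x, ((j : ℝ) - 1) * (Y / N₂)) - u0 (x, ((j : ℝ) - 1) * (Y / N₂))) -
        (u (meshNode X Y N₁ N₂ i j) - u0 (meshNode X Y N₁ N₂ i j))| ≤
      znorm X Y N₁ N₂ (fun p => u p - u0 p) i (j - 1) +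
        X / N₁ * (Y / N₂) * ∑ s ∈ Finset.Icc 1 (i - 1), cellSource X Y N₁ N₂ N u u0 A s j := by
  have hyj := meshInterval_bounds hY hj
  have hbottom := abs_bottom_le_znorm_pred hX hY (hu.cont.sub hu0.cont)
    (hu.sub_basicSol_bottom hu0) hi hj hx
  have hrow := abs_mixedDiff_sub_row_le hX hY hN hu hu0 hosc hj
    ((Nat.sub_le i 1).trans (Finset.mem_Icc.1 hi).2) hy
  have hleft := hu.sub_basicSol_left hu0 y ⟨hyj.1.trans hy.1, hy.2.trans hyj.2⟩
  have hcorner := hu.sub_basicSol_left hu0 (((j : ℝ) - 1) * (Y / N₂))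
    ⟨hyj.1, (hy.1.trans hy.2).trans hyj.2⟩
  rw [Nat.cast_pred (Finset.mem_Icc.1 hi).1, mixedDiff, hleft, hcorner] at hrow
  simp only [meshNode]
  refine le_trans (le_of_eq ?_) ((abs_add_le _ _).trans (add_le_add hbottom hrow))
  congr 1
  simp only [Pi.sub_apply]
  ring

lemma znorm_sub_le_mul_coefR :
    znorm X Y N₁ N₂ (fun p => u p - u0 p) i j ≤
      (znorm X Y N₁ N₂ (fun p => u p - u0 p) i (j - 1) +
          X / N₁ * (Y / N₂) * ∑ s ∈ Finset.Icc 1 (i - 1), cellSource X Y N₁ N₂ N u u0 A s j +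
          (coefN X Y N₁ N₂ N u0 i j + coefL X Y N₁ N₂ N u u0 i j) *
            (znorm X Y N₁ N₂ (fun p => u p - u0 p) (i - 1) j + meshH X Y N₁ N₂ * A) *
            (X / N₁ * (Y / N₂))) *
        coefR X Y N₁ N₂ N u0 i j := by
  have hNc := coefN_nonneg X Y N₁ N₂ N u0 i j
  have hL := coefL_nonneg X Y N₁ N₂ N u u0 i j
  have hA := meshH_mul_nonneg_of_osc_le hX hY hosc hi hj
  have hz := znorm_nonneg X Y N₁ N₂ (fun p => u p - u0 p)
  have hsum : 0 ≤ ∑ s ∈ Finset.Icc 1 (i - 1), cellSource X Y N₁ N₂ N u u0 A s j :=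
    Finset.sum_nonneg fun s _ => cellSource_nonneg hA N u u0 s j
  have hnode := abs_meshNode_le_znorm_pred (z := fun p => u p - u0 p) hX hY
    (hu.cont.sub hu0.cont) (hu.sub_basicSol_left hu0) hi hj
  have hprev := hz i (j - 1)
  have hleft := hz (i - 1) j
  have hR : 0 ≤ coefR X Y N₁ N₂ N u0 i j := hyp0F1_nonneg one_pos (by positivity)
  refine znorm_le (by positivity) fun p hp => ?_
  have hgronwall := (hasMixedDerivOn_sub hX hY hu hu0 hi hj).abs_le_mul_hyp0F1 (by positivity)
    hNc (fun q hq => (abs_pdxy_sub_le hX hY hN hu hu0 hosc hi hj hq).trans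
      (add_le_add_left (mul_le_mul_of_nonneg_left (add_le_add_left hnode _) (by positivity)) _))
    (fun x hx y hy => abs_sub_sides_le hX hY hN hu hu0 hosc hi hj hx hy) hp
  have hwidth : (i : ℝ) * (X / N₁) - ((i : ℝ) - 1) * (X / N₁) = X / N₁ := by ring
  have hheight : (j : ℝ) * (Y / N₂) - ((j : ℝ) - 1) * (Y / N₂) = Y / N₂ := by ring
  rw [hwidth, hheight] at hgronwall
  exact hgronwall.trans (mul_le_mul_of_nonneg_left (hyp0F1_le_coefR N u0 hp) (by positivity))

end ErrorEstimate

theorem z_norm_second_inequality_general {X Y : ℝ} (hX : 0 ≤ X) (hY : 0 ≤ Y) {N : ℝ → ℝ}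
    (hN : ContDiff ℝ 1 N) {f : ℝ × ℝ → ℝ} (hf : ContinuousOn f (clD X Y)) {ψ φ : ℝ → ℝ}
    (hψd : ∀ x ∈ Ioo 0 X, DifferentiableAt ℝ ψ x) (hφd : ∀ y ∈ Ioo 0 Y, DifferentiableAt ℝ φ y)
    (hbψ : BddAbove ((fun x => |deriv ψ x|) '' Ioo 0 X))
    (hbφ : BddAbove ((fun y => |deriv φ y|) '' Ioo 0 Y)) {N₁ N₂ : ℕ} {u u0 : ℝ × ℝ → ℝ}
    (hu : GoursatSol X Y N f ψ φ u) (hu0 : BasicSol X Y N f ψ φ N₁ N₂ u0) :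
    ∀ i ∈ Finset.Icc 1 N₁, ∀ j ∈ Finset.Icc 1 N₂,
      znorm X Y N₁ N₂ (fun p => u p - u0 p) i j ≤
        znorm X Y N₁ N₂ (fun p => u p - u0 p) i (j - 1) *
            (1 + (X / N₁) * (Y / N₂) * coefR' X Y N₁ N₂ N u0 i j) +
          (Y / N₂) * coefR X Y N₁ N₂ N u0 i j *
            ((X / N₁) * ∑ s ∈ Finset.Icc 1 (i - 1),
              ((2 * coefN X Y N₁ N₂ N u0 s j + coefL X Y N₁ N₂ N u u0 s j) *
                  znorm X Y N₁ N₂ (fun p => u p - u0 p) s j +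
                meshH X Y N₁ N₂ *
                  (coefN X Y N₁ N₂ N u0 s j + coefL X Y N₁ N₂ N u u0 s j) *
                  constA X Y N f ψ φ u)) +
          (X / N₁) * (Y / N₂) * coefR X Y N₁ N₂ N u0 i j *
            (coefL X Y N₁ N₂ N u u0 i j + coefN X Y N₁ N₂ N u0 i j) *
            znorm X Y N₁ N₂ (fun p => u p - u0 p) (i - 1) j +
          (X / N₁) * (Y / N₂) * meshH X Y N₁ N₂ * coefR X Y N₁ N₂ N u0 i j *
            (coefN X Y N₁ N₂ N u0 i j + coefL X Y N₁ N₂ N u u0 i j) *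
            constA X Y N f ψ φ u := by
  intro i hi j hj
  have hosc : ∀ i ∈ Finset.Icc 1 N₁, ∀ j ∈ Finset.Icc 1 N₂, ∀ p ∈ cellCl X Y N₁ N₂ i j,
      |u p - u (meshNode X Y N₁ N₂ i j)| ≤ meshH X Y N₁ N₂ * constA X Y N f ψ φ u :=
    fun i hi j hj p hp =>
      hu.abs_sub_meshNode_le hX hY hN.continuous hf hψd hφd hbψ hbφ hi hj hp
  have hmain := znorm_sub_le_mul_coefR hX hY hN hu hu0 hosc hi hj
  have hR := mul_le_mul_of_nonneg_left (coefR_le_one_add_coefR' hX hY N₁ N₂ N u0 i j)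
    (znorm_nonneg X Y N₁ N₂ (fun p => u p - u0 p) i (j - 1))
  simp only [cellSource] at hmain
  linarith

/-- Second inequality of the auxiliary lemma: with `z = u − u⁰`,
`‖z‖_{i,j} ≤ ‖z‖_{i,j−1}(1 + h₁h₂R′_{i,j})
 + h₂R_{i,j}·h₁·Σ_{s=1}^{i−1}[(2N_{s,j}+L_{s,j})‖z‖_{s,j} + h(N_{s,j}+L_{s,j})A]
 + h₁h₂R_{i,j}(L_{i,j}+N_{i,j})‖z‖_{i−1,j} + h₁h₂hR_{i,j}(N_{i,j}+L_{i,j})A`. -/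
theorem z_norm_second_inequality
    (X Y : ℝ) (hX : 0 < X) (hY : 0 < Y)
    (ν : ℕ → ℝ) (N : ℝ → ℝ)
    (hN : ∀ v : ℝ, HasSum (fun s : ℕ => ν s * v ^ s) (N v))
    (f : ℝ × ℝ → ℝ) (hf : ContinuousOn f (clD X Y))
    (ψ φ : ℝ → ℝ)
    (hψc : ContinuousOn ψ (Icc 0 X))
    (hψd : ∀ x ∈ Ioo (0 : ℝ) X, DifferentiableAt ℝ ψ x)
    (hφc : ContinuousOn φ (Icc 0 Y))
    (hφd : ∀ y ∈ Ioo (0 : ℝ) Y, DifferentiableAt ℝ φ y)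
    (hcomp : ψ 0 = φ 0)
    (N₁ N₂ : ℕ) (hN₁ : 1 ≤ N₁) (hN₂ : 1 ≤ N₂)
    (u : ℝ × ℝ → ℝ) (hu : GoursatSol X Y N f ψ φ u)
    (hbψ : BddAbove ((fun x => |deriv ψ x|) '' Ioo 0 X))
    (hbφ : BddAbove ((fun y => |deriv φ y|) '' Ioo 0 Y))
    (huex : ∀ i ∈ Finset.Icc 1 N₁, ∀ j ∈ Finset.Icc 1 N₂,
      ∃ g : ℝ × ℝ → ℝ, ContinuousOn g (cellCl X Y N₁ N₂ i j) ∧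
        EqOn g (pdx u) (cellOp X Y N₁ N₂ i j))
    (huey : ∀ i ∈ Finset.Icc 1 N₁, ∀ j ∈ Finset.Icc 1 N₂,
      ∃ g : ℝ × ℝ → ℝ, ContinuousOn g (cellCl X Y N₁ N₂ i j) ∧
        EqOn g (pdy u) (cellOp X Y N₁ N₂ i j))
    (huexy : ∀ i ∈ Finset.Icc 1 N₁, ∀ j ∈ Finset.Icc 1 N₂,
      ∃ g : ℝ × ℝ → ℝ, ContinuousOn g (cellCl X Y N₁ N₂ i j) ∧
        EqOn g (pdxy u) (cellOp X Y N₁ N₂ i j))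
    (u0 : ℝ × ℝ → ℝ) (hu0 : BasicSol X Y N f ψ φ N₁ N₂ u0)
    (hu0ex : ∀ i ∈ Finset.Icc 1 N₁, ∀ j ∈ Finset.Icc 1 N₂,
      ∃ g : ℝ × ℝ → ℝ, ContinuousOn g (cellCl X Y N₁ N₂ i j) ∧
        EqOn g (pdx u0) (cellOp X Y N₁ N₂ i j))
    (hu0ey : ∀ i ∈ Finset.Icc 1 N₁, ∀ j ∈ Finset.Icc 1 N₂,
      ∃ g : ℝ × ℝ → ℝ, ContinuousOn g (cellCl X Y N₁ N₂ i j) ∧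
        EqOn g (pdy u0) (cellOp X Y N₁ N₂ i j))
    (hu0exy : ∀ i ∈ Finset.Icc 1 N₁, ∀ j ∈ Finset.Icc 1 N₂,
      ∃ g : ℝ × ℝ → ℝ, ContinuousOn g (cellCl X Y N₁ N₂ i j) ∧
        EqOn g (pdxy u0) (cellOp X Y N₁ N₂ i j)) :
    ∀ i ∈ Finset.Icc 1 N₁, ∀ j ∈ Finset.Icc 1 N₂,
      znorm X Y N₁ N₂ (fun p => u p - u0 p) i j ≤
        znorm X Y N₁ N₂ (fun p => u p - u0 p) i (j - 1) *
            (1 + (X / N₁) * (Y / N₂) * coefR' X Y N₁ N₂ N u0 i j) +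
          (Y / N₂) * coefR X Y N₁ N₂ N u0 i j *
            ((X / N₁) * ∑ s ∈ Finset.Icc 1 (i - 1),
              ((2 * coefN X Y N₁ N₂ N u0 s j + coefL X Y N₁ N₂ N u u0 s j) *
                  znorm X Y N₁ N₂ (fun p => u p - u0 p) s j +
                meshH X Y N₁ N₂ *
                  (coefN X Y N₁ N₂ N u0 s j + coefL X Y N₁ N₂ N u u0 s j) *
                  constA X Y N f ψ φ u)) +
          (X / N₁) * (Y / N₂) * coefR X Y N₁ N₂ N u0 i j *
            (coefL X Y N₁ N₂ N u u0 i j + coefN X Y N₁ N₂ N u0 i j) *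
            znorm X Y N₁ N₂ (fun p => u p - u0 p) (i - 1) j +
          (X / N₁) * (Y / N₂) * meshH X Y N₁ N₂ * coefR X Y N₁ N₂ N u0 i j *
            (coefN X Y N₁ N₂ N u0 i j + coefL X Y N₁ N₂ N u u0 i j) *
            constA X Y N f ψ φ u := by
  exact z_norm_second_inequality_general hX.le hY.le (contDiff_of_forall_hasSum_pow hN) hf hψd hφd
    hbψ hbφ hu hu0
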